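/- Let Γ₅ be the finite simple graph on vertices {t₁, t₂, t₃, t₄, t₅} with edge set {t₁t₂, t₃t₄, t₁t₃, t₁t₄, t₂t₄, t₂t₅, t₃t₅}, and in A(Γ₅) set ψ₁ = t₁·t₂, ψ₂ = t₃·t₄, ψ₃ = t₅. Then for every integer m the relation ψ₁^{-m} ψ₃^{m} ψ₁^{m} = (ψ₂^{-m} ψ₁^{m} ψ₂^{m})^{-1} · ψ₃^{m} · (ψ₂^{-m} ψ₁^{m} ψ₂^{m}) holds in A(Γ₅); consequently, for every nonzero integer m the homomorphism from the free group of rank 3 to A(Γ₅) sending the three free generators to ψ₁^{m}, ψ₂^{m}, ψ₃^{m} is not injective, so ψ₁^{m}, ψ₂^{m}, ψ₃^{m} never generate a free group of rank three freely. -/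

import Mathlib

/-- The relators of the right-angled Artin group on a simple graph `Γ`:
one commutator for each edge. -/
def raagRels {V : Type*} (Γ : SimpleGraph V) : Set (FreeGroup V) :=
  {r | ∃ u v : V, Γ.Adj u v ∧
    r = FreeGroup.of u * FreeGroup.of v * (FreeGroup.of u)⁻¹ * (FreeGroup.of v)⁻¹}

/-- The graph on vertices `t₁ = 0, …, t₅ = 4` with edge set
`{t₁t₂, t₃t₄, t₁t₃, t₁t₄, t₂t₄, t₂t₅, t₃t₅}`. -/
def gammaFive : SimpleGraph (Fin 5) :=
  SimpleGraph.fromRel (fun i j => (i, j) ∈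
    ([(0,1),(2,3),(0,2),(0,3),(1,3),(1,4),(2,4)] : List (Fin 5 × Fin 5)))

/-- The elements `ψ₁ = t₁t₂`, `ψ₂ = t₃t₄`, `ψ₃ = t₅` of `A(Γ₅)`. -/
def psiElt : Fin 3 → PresentedGroup (raagRels gammaFive) :=
  ![PresentedGroup.of 0 * PresentedGroup.of 1,
    PresentedGroup.of 2 * PresentedGroup.of 3,
    PresentedGroup.of 4]

/-- If `a, b, c, d, e` satisfy the commutation relations of `Γ₅`, then conjugating `e` by `a * b`
agrees with conjugating it by the conjugate of `a * b` by `c * d`. -/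
theorem conj_eq_conj_conj_of_commute {G : Type*} [Group G] {a b c d e : G}
    (hab : Commute a b) (hcd : Commute c d) (hac : Commute a c) (had : Commute a d)
    (hbd : Commute b d) (hbe : Commute b e) (hce : Commute c e) :
    (a * b)⁻¹ * e * (a * b) =
      ((c * d)⁻¹ * (a * b) * (c * d))⁻¹ * e * ((c * d)⁻¹ * (a * b) * (c * d)) := by
  have hconj : (c * d)⁻¹ * (a * b) * (c * d) = c⁻¹ * b * c * a := by
    have hd : Commute (c⁻¹ * (a * b) * c) d :=
      (hcd.inv_left.mul_left (had.mul_left hbd)).mul_left hcd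
    calc (c * d)⁻¹ * (a * b) * (c * d)
        = d⁻¹ * ((c⁻¹ * (a * b) * c) * d) := by group
      _ = c⁻¹ * (a * b) * c := by rw [hd.eq, inv_mul_cancel_left]
      _ = c⁻¹ * b * (a * c) := by rw [hab.eq]; group
      _ = c⁻¹ * b * c * a := by rw [hac.eq]; group
  have hbc : Commute (c⁻¹ * b * c) e := (hce.inv_left.mul_left hbe).mul_left hce
  have conj_mul_eq : ∀ {x : G}, Commute x e → (x * a)⁻¹ * e * (x * a) = a⁻¹ * e * a := by
    intro x hx
    calc (x * a)⁻¹ * e * (x * a) = a⁻¹ * x⁻¹ * (e * x) * a := by group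
      _ = a⁻¹ * e * a := by rw [← hx.eq]; group
  rw [hconj, conj_mul_eq hbc, hab.eq, conj_mul_eq hbe]

/-- Adjacent vertex generators of a right-angled Artin group commute. -/
theorem commute_of_adj {V : Type*} {Γ : SimpleGraph V} {u v : V} (h : Γ.Adj u v) :
    Commute (PresentedGroup.of u : PresentedGroup (raagRels Γ)) (PresentedGroup.of v) := by
  have hrel := PresentedGroup.one_of_mem (rels := raagRels Γ) ⟨u, v, h, rfl⟩
  simp only [map_mul, map_inv] at hrel
  exact mul_inv_eq_iff_eq_mul.mp (mul_inv_eq_one.mp hrel)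

theorem psiElt_zpow_relation (m : ℤ) :
    (psiElt 0) ^ (-m) * (psiElt 2) ^ m * (psiElt 0) ^ m =
      ((psiElt 1) ^ (-m) * (psiElt 0) ^ m * (psiElt 1) ^ m)⁻¹ * (psiElt 2) ^ m *
        ((psiElt 1) ^ (-m) * (psiElt 0) ^ m * (psiElt 1) ^ m) := by
  have comm : ∀ u v : Fin 5, gammaFive.Adj u v →
      Commute ((PresentedGroup.of u : PresentedGroup (raagRels gammaFive)) ^ m)
        (PresentedGroup.of v ^ m) := fun u v h => (commute_of_adj h).zpow_zpow m m
  have h0 : psiElt 0 ^ m = PresentedGroup.of 0 ^ m * PresentedGroup.of 1 ^ m :=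
    (commute_of_adj (by simp [gammaFive])).mul_zpow m
  have h1 : psiElt 1 ^ m = PresentedGroup.of 2 ^ m * PresentedGroup.of 3 ^ m :=
    (commute_of_adj (by simp [gammaFive])).mul_zpow m
  have h2 : psiElt 2 = PresentedGroup.of 4 := rfl
  rw [zpow_neg, zpow_neg, h0, h1, h2]
  apply conj_eq_conj_conj_of_commute <;> exact comm _ _ (by simp [gammaFive])

/-- The relation `(ψ₃^m)^{ψ₁^m} = (ψ₃^m)^{(ψ₁^m)^{ψ₂^m}}` holds for all `m`, so
for `m ≠ 0` the powers `ψ₁^m, ψ₂^m, ψ₃^m` never freely generate a free group of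
rank three. -/
theorem psi_powers_not_free :
    (∀ m : ℤ, (psiElt 0) ^ (-m) * (psiElt 2) ^ m * (psiElt 0) ^ m =
      ((psiElt 1) ^ (-m) * (psiElt 0) ^ m * (psiElt 1) ^ m)⁻¹ * (psiElt 2) ^ m *
        ((psiElt 1) ^ (-m) * (psiElt 0) ^ m * (psiElt 1) ^ m)) ∧
    ∀ m : ℤ, m ≠ 0 →
      ¬ Function.Injective
        (FreeGroup.lift ![(psiElt 0) ^ m, (psiElt 1) ^ m, (psiElt 2) ^ m]) := by
  refine ⟨psiElt_zpow_relation, fun m _ hinj => ?_⟩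
  let x : Fin 3 → FreeGroup (Fin 3) := FreeGroup.of
  have hne : (x 0)⁻¹ * x 2 * x 0 ≠
      ((x 1)⁻¹ * x 0 * x 1)⁻¹ * x 2 * ((x 1)⁻¹ * x 0 * x 1) := by
    decide
  refine hne (hinj ?_)
  have hrel := psiElt_zpow_relation m
  rw [zpow_neg, zpow_neg] at hrel
  simpa [x] using hrel
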